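/- arXiv:2106.03753 — 7 statements merged into one kernel-verified Lean document; each statement's English description precedes it below -/
import Mathlib

section
/- Let L be a natural number and S a nonempty finite set of natural numbers all less than 2^L, and let C 0, C 1, …, C L be the season elimination process on S. Then C L = {max S}, i.e., the final set is the singleton consisting of the maximum element of S. -/
/-- One step of the season elimination process: at step `k` (bit position `L - 1 - k`,
most significant bit first), the candidates whose bit is `1` eliminate those whose bit
is `0`; if no candidate has bit `1`, the candidate set is unchanged. -/
def seasonStep (L k : ℕ) (C : Finset ℕ) : Finset ℕ :=
  let C' := C.filter fun x => Nat.testBit x (L - 1 - k) = true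
  if C'.Nonempty then C' else C

/-- The season elimination process on a finite set `S` of `L`-bit identifiers:
`seasonProcess L S 0 = S` and `seasonProcess L S (k+1)` is obtained from
`seasonProcess L S k` by one elimination step on bit `L - 1 - k`. -/
def seasonProcess (L : ℕ) (S : Finset ℕ) : ℕ → Finset ℕ
  | 0 => S
  | k + 1 => seasonStep L k (seasonProcess L S k)

/-- Invariant: after `k ≤ L` steps, the candidates are elements of `S`, include the maximum `m`,
and agree with `m` on all bits at positions `≥ L - k`. -/
theorem seasonProcess_invariant_s1 (L : ℕ) (S : Finset ℕ) (m : ℕ) (hm : m ∈ S)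
    (hmax : ∀ x ∈ S, x ≤ m) (hlt : ∀ x ∈ S, x < 2 ^ L) (k : ℕ) (hk : k ≤ L) :
    m ∈ seasonProcess L S k ∧ ∀ x ∈ seasonProcess L S k,
      x ∈ S ∧ ∀ j, L - k ≤ j → x.testBit j = m.testBit j := by
  induction k with
  | zero =>
    refine ⟨hm, fun x hx => ⟨hx, fun j hj => ?_⟩⟩
    have hp : 2 ^ L ≤ 2 ^ j := Nat.pow_le_pow_right (by norm_num) (by omega)
    rw [Nat.testBit_eq_false_of_lt ((hlt x hx).trans_le hp),
      Nat.testBit_eq_false_of_lt ((hlt m hm).trans_le hp)]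
  | succ k ih =>
    obtain ⟨h1, h2⟩ := ih (by omega)
    -- no candidate has a one where `m` has a zero
    have key : ∀ x ∈ seasonProcess L S k, x.testBit (L - 1 - k) = true →
        m.testBit (L - 1 - k) = true := by
      intro x hx hb
      by_contra hc
      have hlt' : m < x := Nat.lt_of_testBit (L - 1 - k) (by simpa using hc) hb
        fun j hj => ((h2 x hx).2 j (by omega)).symm
      exact absurd (hmax x (h2 x hx).1) (by omega)
    have hsplit : ∀ j, L - (k + 1) ≤ j → j = L - 1 - k ∨ L - k ≤ j := by
      intro j hj
      omega
    simp only [seasonProcess, seasonStep]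
    split_ifs with hne
    · obtain ⟨y, hy⟩ := hne
      rw [Finset.mem_filter] at hy
      have hmb := key y hy.1 hy.2
      refine ⟨Finset.mem_filter.2 ⟨h1, hmb⟩, fun x hx => ?_⟩
      rw [Finset.mem_filter] at hx
      refine ⟨(h2 x hx.1).1, fun j hj => ?_⟩
      rcases hsplit j hj with rfl | h
      · rw [hx.2, hmb]
      · exact (h2 x hx.1).2 j h
    · have hz : ∀ x ∈ seasonProcess L S k, x.testBit (L - 1 - k) = false := by
        intro x hx
        by_contra hc
        exact hne ⟨x, Finset.mem_filter.2 ⟨hx, by simpa using hc⟩⟩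
      refine ⟨h1, fun x hx => ⟨(h2 x hx).1, fun j hj => ?_⟩⟩
      rcases hsplit j hj with rfl | h
      · rw [hz x hx, hz m h1]
      · exact (h2 x hx).2 j h

/-- After `L` steps, the season elimination process on a nonempty set `S` of naturals
below `2^L` ends with exactly the maximum element of `S` as the unique candidate. -/
theorem seasonProcess_final (L : ℕ) (S : Finset ℕ) (hS : S.Nonempty)
    (hlt : ∀ x ∈ S, x < 2 ^ L) :
    seasonProcess L S L = {S.max' hS} := by
  obtain ⟨h1, h2⟩ := seasonProcess_invariant_s1 L S (S.max' hS) (S.max'_mem hS)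
    (fun x hx => S.le_max' x hx) hlt L le_rfl
  refine Finset.eq_singleton_iff_unique_mem.2 ⟨h1, fun x hx => ?_⟩
  exact Nat.eq_of_testBit_eq fun j => (h2 x hx).2 j (by omega)
end

section
/- Let L be a natural number and S a nonempty finite set of natural numbers all less than 2^L, and let C 0, C 1, …, C L be the season elimination process on S. Then for every k ≤ L the set C k is nonempty and contains max S, and for every k < L one has C (k+1) ⊆ C k. -/
theorem seasonStep_subset (L k : ℕ) (C : Finset ℕ) : seasonStep L k C ⊆ C := by
  unfold seasonStep
  dsimp only
  split_ifs
  · exact Finset.filter_subset _ _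
  · exact Finset.Subset.refl _

theorem seasonProcess_aux (L : ℕ) (S : Finset ℕ) (hS : S.Nonempty)
    (hlt : ∀ x ∈ S, x < 2 ^ L) (k : ℕ) (hk : k ≤ L) :
    S.max' hS ∈ seasonProcess L S k ∧ ∀ x ∈ seasonProcess L S k, x ∈ S ∧
      ∀ j, L - k ≤ j → x.testBit j = (S.max' hS).testBit j := by
  induction k with
  | zero =>
    refine ⟨S.max'_mem hS, fun x hx => ⟨hx, fun j hj => ?_⟩⟩
    have h : ∀ y ∈ S, y.testBit j = false := fun y hy =>
      Nat.testBit_lt_two_pow ((hlt y hy).trans_le (Nat.pow_le_pow_right (by norm_num) hj))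
    rw [h x hx, h _ (S.max'_mem hS)]
  | succ k ih =>
    obtain ⟨hm, hC⟩ := ih (by omega)
    simp only [seasonProcess, seasonStep]
    split_ifs with h
    · obtain ⟨y, hy⟩ := h
      rw [Finset.mem_filter] at hy
      have hb : (S.max' hS).testBit (L - 1 - k) = true := by
        by_contra hb
        have hlt' : S.max' hS < y := Nat.lt_of_testBit (L - 1 - k) (by simpa using hb) hy.2
          (fun j hj => ((hC y hy.1).2 j (by omega)).symm)
        exact absurd (S.le_max' y (hC y hy.1).1) (by omega)
      refine ⟨Finset.mem_filter.2 ⟨hm, hb⟩, fun x hx => ?_⟩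
      rw [Finset.mem_filter] at hx
      refine ⟨(hC x hx.1).1, fun j hj => ?_⟩
      rcases Nat.lt_or_ge j (L - k) with h1 | h1
      · obtain rfl : j = L - 1 - k := by omega
        rw [hx.2, hb]
      · exact (hC x hx.1).2 j h1
    · have hf : ∀ y ∈ seasonProcess L S k, y.testBit (L - 1 - k) = false := by
        intro y hy
        by_contra hb
        exact h ⟨y, Finset.mem_filter.2 ⟨hy, by simpa using hb⟩⟩
      refine ⟨hm, fun x hx => ⟨(hC x hx).1, fun j hj => ?_⟩⟩
      rcases Nat.lt_or_ge j (L - k) with h1 | h1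
      · obtain rfl : j = L - 1 - k := by omega
        rw [hf x hx, hf _ hm]
      · exact (hC x hx).2 j h1

/-- Invariant of the season elimination process on a nonempty set `S` of naturals
below `2^L`: every candidate set is nonempty and contains the maximum of `S`, and the
candidate sets only shrink. -/
theorem seasonProcess_invariant (L : ℕ) (S : Finset ℕ) (hS : S.Nonempty)
    (hlt : ∀ x ∈ S, x < 2 ^ L) :
    (∀ k ≤ L, (seasonProcess L S k).Nonempty ∧ S.max' hS ∈ seasonProcess L S k) ∧
      (∀ k < L, seasonProcess L S (k + 1) ⊆ seasonProcess L S k) := by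
  refine ⟨fun k hk => ?_, fun k _ => seasonStep_subset L k _⟩
  have h := (seasonProcess_aux L S hS hlt k hk).1
  exact ⟨⟨_, h⟩, h⟩
end

section
/- Let L be a natural number and S a finite set of M ≥ 1 natural numbers all less than 2^L. Define T 1 = S and, for j = 1, …, M, let the season elimination process on T j end in a final set C L; then C L is a singleton {w j} with w j = max (T j), and set T (j+1) = T j \ {w j}. Then w 1 > w 2 > ⋯ > w M, the elements w 1, …, w M enumerate all of S, w M = min S, and the label map ℓ defined on S by ℓ(x) = |{y ∈ S : x ≤ y}| satisfies ℓ(w j) = j for every j and is a bijection from S onto {1, 2, …, M}. In particular, the iterated process assigns a unique label in {1, …, M} to each of the M elements. -/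
/-- After `k` steps the survivors are exactly the elements agreeing with the maximum on the
`k` most significant bits. -/
theorem season_invariant (L : ℕ) (S : Finset ℕ) (hlt : ∀ x ∈ S, x < 2 ^ L) (m : ℕ)
    (hm : m ∈ S) (hmax : ∀ x ∈ S, x ≤ m) (k : ℕ) (hk : k ≤ L) :
    seasonProcess L S k = S.filter fun x => x / 2 ^ (L - k) = m / 2 ^ (L - k) := by
  induction k with
  | zero =>
    ext x
    simp only [seasonProcess, Finset.mem_filter, Nat.sub_zero]
    constructor
    · intro hx
      exact ⟨hx, by rw [Nat.div_eq_of_lt (hlt x hx), Nat.div_eq_of_lt (hlt m hm)]⟩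
    · exact fun h => h.1
  | succ k ih =>
    obtain ⟨d, hd⟩ : ∃ d, L = k + 1 + d := ⟨L - (k + 1), by omega⟩
    have e1 : L - k = d + 1 := by omega
    have e2 : L - (k + 1) = d := by omega
    have e3 : L - 1 - k = d := by omega
    have hdiv : ∀ x : ℕ, x / 2 ^ (d + 1) = x / 2 ^ d / 2 := by
      intro x
      rw [pow_succ, Nat.div_div_eq_div_mul]
    have hmono : ∀ x ∈ S, x / 2 ^ d ≤ m / 2 ^ d := fun x hx =>
      Nat.div_le_div_right (hmax x hx)
    simp only [seasonProcess, ih (by omega), seasonStep, e1, e2, e3,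
      Nat.testBit_eq_decide_div_mod_eq, decide_eq_true_eq, hdiv]
    split_ifs with h
    · obtain ⟨z, hz⟩ := h
      simp only [Finset.mem_filter] at hz
      have hz1 := hmono z hz.1.1
      ext x
      simp only [Finset.mem_filter]
      constructor
      · rintro ⟨⟨hx, h1⟩, h2⟩
        exact ⟨hx, by omega⟩
      · rintro ⟨hx, h1⟩
        exact ⟨⟨hx, by omega⟩, by omega⟩
    · rw [Finset.not_nonempty_iff_eq_empty, Finset.eq_empty_iff_forall_notMem] at h
      simp only [Finset.mem_filter, not_and] at h
      have hm2 := h m ⟨hm, rfl⟩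
      ext x
      simp only [Finset.mem_filter]
      constructor
      · rintro ⟨hx, h1⟩
        have := h x ⟨hx, h1⟩
        exact ⟨hx, by omega⟩
      · rintro ⟨hx, h1⟩
        exact ⟨hx, by omega⟩

/-- The season elimination process on a nonempty set of `L`-bit identifiers ends in the
singleton of its maximum. -/
theorem season_final (L : ℕ) (S : Finset ℕ) (hlt : ∀ x ∈ S, x < 2 ^ L) (hS : S.Nonempty) :
    seasonProcess L S L = {S.max' hS} := by
  rw [season_invariant L S hlt (S.max' hS) (S.max'_mem hS) (fun x hx => S.le_max' x hx) L le_rfl]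
  ext x
  simp only [Finset.mem_filter, Nat.sub_self, pow_zero, Nat.div_one, Finset.mem_singleton]
  constructor
  · exact fun h => h.2
  · rintro rfl
    exact ⟨S.max'_mem hS, rfl⟩

/-- The combinatorial core of the deterministic naming algorithm DETNAML: iterating the
season elimination process on a set `S` of `M ≥ 1` identifiers below `2^L`, where in each
season `j` the final candidate set is the singleton `{w j}` and `w j` then stops
participating (`T (j+1) = T j \ {w j}`, starting from `T 1 = S`), we have:
each `w j` is the maximum of `T j`; the `w j` are strictly decreasing; they enumerate all
of `S`; `w M` is the minimum of `S`; and the label map `ℓ(x) = |{y ∈ S : x ≤ y}|`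
satisfies `ℓ(w j) = j` and is a bijection from `S` onto `{1, …, M}`. -/
theorem detnaml_labels (L M : ℕ) (hM : 1 ≤ M) (S : Finset ℕ) (hcard : S.card = M)
    (hlt : ∀ x ∈ S, x < 2 ^ L)
    (T : ℕ → Finset ℕ) (w : ℕ → ℕ)
    (hT1 : T 1 = S)
    (hfinal : ∀ j, 1 ≤ j → j ≤ M → seasonProcess L (T j) L = {w j})
    (hTstep : ∀ j, 1 ≤ j → j ≤ M → T (j + 1) = T j \ {w j}) :
    (∀ j, 1 ≤ j → j ≤ M → ∃ h : (T j).Nonempty, w j = (T j).max' h) ∧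
    (∀ j, 1 ≤ j → j < M → w (j + 1) < w j) ∧
    (∀ x ∈ S, ∃ j, 1 ≤ j ∧ j ≤ M ∧ w j = x) ∧
    (∃ hS : S.Nonempty, w M = S.min' hS) ∧
    (∀ j, 1 ≤ j → j ≤ M → (S.filter fun y => w j ≤ y).card = j) ∧
    Set.BijOn (fun x => (S.filter fun y => x ≤ y).card) ↑S (Set.Icc 1 M) := by
  have key : ∀ j, j ≤ M → T (j + 1) ⊆ S ∧ (T (j + 1)).card = M - j ∧
      (∀ x ∈ S, x ∉ T (j + 1) → ∃ i, 1 ≤ i ∧ i ≤ j ∧ w i = x) ∧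
      (∀ x ∈ S, x ∉ T (j + 1) → ∀ y ∈ T (j + 1), y < x) ∧
      (1 ≤ j → ∃ h : (T j).Nonempty, w j = (T j).max' h) := by
    intro j
    induction j with
    | zero =>
      intro _
      simp only [zero_add, hT1]
      refine ⟨subset_rfl, by omega, fun x hx h => absurd hx h, fun x hx h => absurd hx h,
        fun h => by omega⟩
    | succ j ih =>
      intro hj
      obtain ⟨hsub, hc, hen, hgt, -⟩ := ih (by omega)
      have hne : (T (j + 1)).Nonempty := Finset.card_pos.mp (by omega)
      have hw : w (j + 1) = (T (j + 1)).max' hne := by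
        have h1 := hfinal (j + 1) (by omega) hj
        rw [season_final L _ (fun x hx => hlt x (hsub hx)) hne] at h1
        exact (Finset.singleton_injective h1).symm
      have hmem : w (j + 1) ∈ T (j + 1) := hw ▸ Finset.max'_mem _ hne
      have hle : ∀ y ∈ T (j + 1), y ≤ w (j + 1) := fun y hy => hw ▸ Finset.le_max' _ y hy
      have hst := hTstep (j + 1) (by omega) hj
      have hmem' : ∀ y, y ∈ T (j + 1 + 1) ↔ y ∈ T (j + 1) ∧ y ≠ w (j + 1) := by
        intro y
        rw [hst]
        simp
      refine ⟨fun y hy => hsub ((hmem' y).1 hy).1, ?_, ?_, ?_, fun _ => ⟨hne, hw⟩⟩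
      · rw [hst, Finset.card_sdiff_of_subset (by simpa using hmem), hc, Finset.card_singleton]
        omega
      · intro x hx hn
        by_cases hxT : x ∈ T (j + 1)
        · refine ⟨j + 1, by omega, le_rfl, ?_⟩
          by_contra hcon
          exact hn ((hmem' x).2 ⟨hxT, fun h => hcon h.symm⟩)
        · obtain ⟨i, h1, h2, h3⟩ := hen x hx hxT
          exact ⟨i, h1, by omega, h3⟩
      · intro x hx hn y hy
        obtain ⟨hy1, hy2⟩ := (hmem' y).1 hy
        by_cases hxT : x ∈ T (j + 1)
        · have hxw : x = w (j + 1) := by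
            by_contra hcon
            exact hn ((hmem' x).2 ⟨hxT, hcon⟩)
          rw [hxw]
          exact lt_of_le_of_ne (hle y hy1) hy2
        · exact hgt x hx hxT y hy1
  have A : ∀ j, 1 ≤ j → j ≤ M → ∃ h : (T j).Nonempty, w j = (T j).max' h :=
    fun j h1 h2 => (key j h2).2.2.2.2 h1
  have hmem : ∀ j, 1 ≤ j → j ≤ M → w j ∈ T j := by
    intro j h1 h2
    obtain ⟨h, hw⟩ := A j h1 h2
    exact hw ▸ Finset.max'_mem _ h
  have hle : ∀ j, 1 ≤ j → j ≤ M → ∀ y ∈ T j, y ≤ w j := by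
    intro j h1 h2 y hy
    obtain ⟨h, hw⟩ := A j h1 h2
    exact hw ▸ Finset.le_max' _ y hy
  have hsubS : ∀ j, 1 ≤ j → j ≤ M → T j ⊆ S ∧ (T j).card = M + 1 - j ∧
      (∀ x ∈ S, x ∉ T j → ∀ y ∈ T j, y < x) := by
    intro j h1 h2
    obtain ⟨i, rfl⟩ : ∃ i, j = i + 1 := ⟨j - 1, by omega⟩
    obtain ⟨a, b, -, c, -⟩ := key i (by omega)
    exact ⟨a, by omega, c⟩
  have C : ∀ x ∈ S, ∃ j, 1 ≤ j ∧ j ≤ M ∧ w j = x := by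
    intro x hx
    obtain ⟨-, hc, hen, -, -⟩ := key M le_rfl
    rw [Nat.sub_self, Finset.card_eq_zero] at hc
    exact hen x hx (by simp [hc])
  have E : ∀ j, 1 ≤ j → j ≤ M → (S.filter fun y => w j ≤ y).card = j := by
    intro j h1 h2
    obtain ⟨hs, hc, hgt⟩ := hsubS j h1 h2
    have heq : (S.filter fun y => w j ≤ y) = insert (w j) (S \ T j) := by
      ext y
      simp only [Finset.mem_filter, Finset.mem_insert, Finset.mem_sdiff]
      constructor
      · rintro ⟨hy, hwy⟩
        by_cases hyT : y ∈ T j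
        · exact Or.inl (le_antisymm (hle j h1 h2 y hyT) hwy)
        · exact Or.inr ⟨hy, hyT⟩
      · rintro (rfl | ⟨hy, hyT⟩)
        · exact ⟨hs (hmem j h1 h2), le_rfl⟩
        · exact ⟨hy, (hgt y hy hyT _ (hmem j h1 h2)).le⟩
    rw [heq, Finset.card_insert_of_notMem (by simp [hmem j h1 h2]),
      Finset.card_sdiff_of_subset hs, hc, hcard]
    omega
  refine ⟨A, ?_, C, ?_, E, ?_, ?_, ?_⟩
  · intro j h1 h2
    have hm := hmem (j + 1) (by omega) (by omega)
    rw [hTstep j h1 (by omega)] at hm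
    simp only [Finset.mem_sdiff, Finset.mem_singleton] at hm
    exact lt_of_le_of_ne (hle j h1 (by omega) _ hm.1) hm.2
  · have hS : S.Nonempty := Finset.card_pos.mp (by omega)
    refine ⟨hS, ?_⟩
    obtain ⟨hs, hc, hgt⟩ := hsubS M hM le_rfl
    apply le_antisymm
    · apply Finset.le_min'
      intro y hy
      by_cases hyT : y ∈ T M
      · exact (Finset.card_le_one.mp (by omega) _ (hmem M hM le_rfl) y hyT).le
      · exact (hgt y hy hyT _ (hmem M hM le_rfl)).le
    · exact Finset.min'_le _ _ (hs (hmem M hM le_rfl))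
  · intro x hx
    obtain ⟨j, h1, h2, rfl⟩ := C x hx
    simp only [E j h1 h2]
    exact ⟨h1, h2⟩
  · intro x hx y hy hxy
    obtain ⟨i, h1, h2, rfl⟩ := C x hx
    obtain ⟨j, h3, h4, rfl⟩ := C y hy
    simp only [E i h1 h2, E j h3 h4] at hxy
    rw [hxy]
  · rintro j ⟨h1, h2⟩
    exact ⟨w j, (hsubS j h1 h2).1 (hmem j h1 h2), E j h1 h2⟩
end

section
/- There exist real constants c₁ > 0, c₂ > 0, c > 0, C > 0 and a natural number n₀ such that for every n ≥ n₀ the following holds. Let m = ⌈n / log₂ n⌉ and let n stations independently and uniformly at random each choose one of m groups. Then with probability at least 1 − C·n^(−c), every group b has load between c₁·log₂ n and c₂·log₂ n. -/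
open MeasureTheory

/-- The uniform probability measure on `Fin m` (for `m ≥ 1`): counting measure
normalized by the cardinality `m`. -/
noncomputable def uniformFin (m : ℕ) : Measure (Fin m) :=
  (m : ENNReal)⁻¹ • Measure.count

/-- The distribution of `n` stations each independently and uniformly choosing one of
`m` groups: the product of `n` copies of the uniform measure on `Fin m`. -/
noncomputable def uniformChoices (n m : ℕ) : Measure (Fin n → Fin m) :=
  Measure.pi fun _ => uniformFin m

/-- The load of group `b` under the outcome `X`: the number of stations choosing `b`. -/
def load {n m : ℕ} (X : Fin n → Fin m) (b : Fin m) : ℕ :=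
  (Finset.univ.filter fun i => X i = b).card

theorem uniformFin_prob {m : ℕ} (hm : 0 < m) : IsProbabilityMeasure (uniformFin m) := by
  constructor
  simp only [uniformFin, Measure.smul_apply, smul_eq_mul, Measure.count_univ]
  have h0 : (m : ENNReal) ≠ 0 := by exact_mod_cast hm.ne'
  simpa using ENNReal.inv_mul_cancel h0 (ENNReal.natCast_ne_top m)

theorem uniformChoices_prob {n m : ℕ} (hm : 0 < m) :
    IsProbabilityMeasure (uniformChoices n m) := by
  have := uniformFin_prob hm
  unfold uniformChoices
  infer_instance

theorem pow_load {n m : ℕ} (t : ℝ) (b : Fin m) (X : Fin n → Fin m) :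
    t ^ (load X b) = ∏ i, (if X i = b then t else 1) := by
  rw [load, Finset.prod_ite]
  simp

theorem integral_weight_single {m : ℕ} (hm : 0 < m) (t : ℝ) (b : Fin m) :
    ∫ x, (if x = b then t else 1) ∂(uniformFin m) = 1 + (t - 1) / m := by
  have hm' : (m : ℝ) ≠ 0 := by exact_mod_cast hm.ne'
  have h : ∀ x : Fin m, (if x = b then t else 1) = 1 + (if x = b then t - 1 else 0) := by
    intro x; split_ifs <;> ring
  rw [uniformFin, integral_smul_measure, integral_count]
  simp_rw [h]
  rw [Finset.sum_add_distrib]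
  simp
  field_simp

theorem integral_pow_load {n m : ℕ} (hm : 0 < m) (t : ℝ) (b : Fin m) :
    ∫ X, t ^ (load X b) ∂(uniformChoices n m) = (1 + (t - 1) / m) ^ n := by
  have := uniformFin_prob hm
  simp_rw [pow_load]
  rw [uniformChoices]
  rw [integral_fintype_prod_eq_prod (fun (_ : Fin n) (x : Fin m) => if x = b then t else 1)]
  simp [integral_weight_single hm]

theorem tail {n m : ℕ} (hm : 0 < m) (t s : ℝ) (ht : 0 ≤ t) (hs : 0 < s) (b : Fin m) :
    (uniformChoices n m).real {X | s ≤ t ^ (load X b)} ≤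
      Real.exp ((t - 1) * (n / m)) / s := by
  have := uniformChoices_prob (n := n) hm
  have h1 := mul_meas_ge_le_integral_of_nonneg (μ := uniformChoices n m)
    (f := fun X => t ^ (load X b)) (Filter.Eventually.of_forall fun X => by positivity)
    Integrable.of_finite s
  rw [integral_pow_load hm] at h1
  rw [le_div_iff₀ hs, mul_comm]
  refine h1.trans ?_
  have hm1 : (1 : ℝ) ≤ m := by exact_mod_cast hm
  have h2 : 1 + (t - 1) / m ≤ Real.exp ((t - 1) / m) := by
    linarith [Real.add_one_le_exp ((t - 1) / m)]
  have h3 : 0 ≤ 1 + (t - 1) / m := by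
    have : 1 + (t - 1) / m = ((m - 1) + t) / m := by field_simp; ring
    rw [this]
    apply div_nonneg <;> linarith
  calc (1 + (t - 1) / m) ^ n ≤ Real.exp ((t - 1) / m) ^ n := pow_le_pow_left₀ h3 h2 n
    _ = Real.exp ((t - 1) * (n / m)) := by
      rw [← Real.exp_nat_mul]; congr 1; ring

/-- Upper tail. -/
theorem upper {n m : ℕ} (hm : 0 < m) (hn : 2 ≤ n) (hL : (n : ℝ) / m ≤ Real.logb 2 n)
    (b : Fin m) :
    (uniformChoices n m).real {X | 5 * Real.logb 2 n < (load X b : ℝ)} ≤ (n : ℝ) ^ (-3 : ℝ) := by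
  have := uniformChoices_prob (n := n) hm
  have hn0 : (0 : ℝ) < n := by positivity
  have hpow : (2 : ℝ) ^ (Real.logb 2 n) = n := Real.rpow_logb (by norm_num) (by norm_num) hn0
  have hsub : {X : Fin n → Fin m | 5 * Real.logb 2 n < (load X b : ℝ)} ⊆
      {X | (n : ℝ) ^ (5 : ℝ) ≤ 2 ^ (load X b)} := by
    intro X hX
    simp only [Set.mem_ofPred_eq] at hX ⊢
    rw [← Real.rpow_natCast 2]
    nth_rewrite 1 [← hpow]
    rw [← Real.rpow_mul (by norm_num)]
    exact Real.rpow_le_rpow_of_exponent_le (by norm_num) (by linarith)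
  refine (measureReal_mono hsub).trans ((tail hm 2 _ (by norm_num) (by positivity) b).trans ?_)
  rw [div_le_iff₀ (by positivity), ← Real.rpow_add hn0]
  have hlog : Real.logb 2 n * Real.log 2 = Real.log n := by
    rw [Real.logb]; field_simp
  have hlogn : 0 ≤ Real.log n := Real.log_nonneg (by exact_mod_cast (by omega : 1 ≤ n))
  have hl2 := Real.log_two_gt_d9
  have hLnn : 0 ≤ Real.logb 2 n := by
    by_contra h
    push Not at h
    nlinarith
  rw [Real.rpow_def_of_pos hn0]
  apply Real.exp_le_exp.mpr
  nlinarith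

/-- Lower tail. -/
theorem lower {n m : ℕ} (hm : 0 < m) (hn : 2 ≤ n) (hL : Real.logb 2 n - 1 ≤ (n : ℝ) / m)
    (b : Fin m) :
    (uniformChoices n m).real {X | (load X b : ℝ) < 1 / 100 * Real.logb 2 n} ≤
      3 * (n : ℝ) ^ (-(6 / 5) : ℝ) := by
  have := uniformChoices_prob (n := n) hm
  have hn0 : (0 : ℝ) < n := by positivity
  have hpow : (2 : ℝ) ^ (Real.logb 2 n) = n := Real.rpow_logb (by norm_num) (by norm_num) hn0
  have hsub : {X : Fin n → Fin m | (load X b : ℝ) < 1 / 100 * Real.logb 2 n} ⊆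
      {X | (n : ℝ) ^ (-(3 / 100) : ℝ) ≤ (1 / 8) ^ (load X b)} := by
    intro X hX
    simp only [Set.mem_ofPred_eq] at hX ⊢
    have h8 : (1 / 8 : ℝ) = 2 ^ (-3 : ℝ) := by
      rw [Real.rpow_neg (by norm_num)]; norm_num
    rw [← Real.rpow_natCast (1 / 8), h8]
    nth_rewrite 1 [← hpow]
    rw [← Real.rpow_mul (by norm_num), ← Real.rpow_mul (by norm_num)]
    exact Real.rpow_le_rpow_of_exponent_le (by norm_num) (by linarith)
  refine (measureReal_mono hsub).trans ((tail hm (1 / 8) _ (by norm_num) (by positivity) b).trans ?_)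
  rw [div_le_iff₀ (by positivity), mul_assoc, ← Real.rpow_add hn0]
  have hlog : Real.logb 2 n * Real.log 2 = Real.log n := by
    rw [Real.logb]; field_simp
  have hlogn : 0 ≤ Real.log n := Real.log_nonneg (by exact_mod_cast (by omega : 1 ≤ n))
  have hl2 := Real.log_two_gt_d9
  have hl2' := Real.log_two_lt_d9
  have hLnn : 0 ≤ Real.logb 2 n := by
    by_contra h
    push Not at h
    nlinarith
  rw [Real.rpow_def_of_pos hn0]
  have he : Real.exp 1 ≤ 3 := by linarith [Real.exp_one_lt_d9]
  calc Real.exp ((1 / 8 - 1) * (n / m)) ≤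
        Real.exp (1 + Real.log n * (-(6 / 5) + -(3 / 100))) := by
        apply Real.exp_le_exp.mpr
        nlinarith
    _ = Real.exp 1 * Real.exp (Real.log n * (-(6 / 5) + -(3 / 100))) := Real.exp_add _ _
    _ ≤ _ := by gcongr

theorem logb_sq_le {n : ℕ} (hn : 1000000 ≤ n) : Real.logb 2 n ^ 2 ≤ n := by
  have hn1 : (1000000 : ℝ) ≤ n := by exact_mod_cast hn
  have hn0 : (0 : ℝ) < n := by linarith
  have h1 : Real.log n ≤ (n : ℝ) ^ (1 / 4 : ℝ) / (1 / 4) :=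
    Real.log_le_rpow_div hn0.le (by norm_num)
  set q := (n : ℝ) ^ (1 / 4 : ℝ) with hq
  have hq4 : q ^ 4 = n := by
    rw [hq, ← Real.rpow_natCast, ← Real.rpow_mul hn0.le]; norm_num
  have hq0 : 0 ≤ q := by positivity
  have hq30 : 30 ≤ q := by
    by_contra h
    push Not at h
    have : q ^ 4 ≤ 30 ^ 4 := pow_le_pow_left₀ hq0 h.le 4
    norm_num at this
    linarith
  have hlog : Real.logb 2 n * Real.log 2 = Real.log n := by
    rw [Real.logb]; field_simp
  have hlogn : 0 ≤ Real.log n := Real.log_nonneg (by linarith)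
  have hl2 := Real.log_two_gt_d9
  have hLnn : 0 ≤ Real.logb 2 n := by
    by_contra h
    push Not at h
    nlinarith
  have h2 : Real.logb 2 n ≤ 8 * q := by nlinarith
  calc Real.logb 2 n ^ 2 ≤ (8 * q) ^ 2 := pow_le_pow_left₀ hLnn h2 2
    _ ≤ q ^ 4 := by nlinarith [mul_nonneg hq0 hq0]
    _ = n := hq4

/-- When `n` stations independently and uniformly at random each choose one of
`m = ⌈n / log₂ n⌉` groups, with probability at least `1 - C·n^(-c)` every group
has load `Θ(log n)`, i.e. between `c₁·log₂ n` and `c₂·log₂ n`. -/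
theorem balanced_groups_whp :
    ∃ (c₁ c₂ c C : ℝ), 0 < c₁ ∧ 0 < c₂ ∧ 0 < c ∧ 0 < C ∧
      ∃ n₀ : ℕ, ∀ n : ℕ, n₀ ≤ n →
        ENNReal.ofReal (1 - C * (n : ℝ) ^ (-c)) ≤
          uniformChoices n ⌈(n : ℝ) / Real.logb 2 n⌉₊
            {X | ∀ b, c₁ * Real.logb 2 n ≤ (load X b : ℝ) ∧
                      (load X b : ℝ) ≤ c₂ * Real.logb 2 n} := by
  refine ⟨1 / 100, 5, 1 / 5, 4, by norm_num, by norm_num, by norm_num, by norm_num, 1000000, ?_⟩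
  intro n hn
  have hn1 : (1000000 : ℝ) ≤ n := by exact_mod_cast hn
  have hn0 : (0 : ℝ) < n := by linarith
  set L := Real.logb 2 n with hLdef
  have hL1 : 1 ≤ L := by
    rw [hLdef, Real.le_logb_iff_rpow_le (by norm_num) hn0]
    norm_num; linarith
  have hL2 : L ^ 2 ≤ n := logb_sq_le hn
  set m := ⌈(n : ℝ) / L⌉₊ with hmdef
  have hm : 0 < m := Nat.ceil_pos.mpr (by positivity)
  have hm0 : (0 : ℝ) < m := by exact_mod_cast hm
  have hmge : (n : ℝ) / L ≤ m := Nat.le_ceil _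
  have hmlt : (m : ℝ) < n / L + 1 := Nat.ceil_lt_add_one (by positivity)
  have hmn : m ≤ n := Nat.ceil_le.mpr (div_le_self hn0.le hL1)
  have hmn' : (m : ℝ) ≤ n := by exact_mod_cast hmn
  have hup : (n : ℝ) / m ≤ L := by
    rw [div_le_iff₀ hm0]
    rw [div_le_iff₀ (by linarith)] at hmge
    linarith
  have hlo : L - 1 ≤ (n : ℝ) / m := by
    rw [le_div_iff₀ hm0]
    have h1 : (L - 1) * m ≤ (L - 1) * (n / L + 1) :=
      mul_le_mul_of_nonneg_left hmlt.le (by linarith)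
    have h2 : (L - 1) * (n / L + 1) = n + L - 1 - n / L := by field_simp; ring
    have h3 : L ≤ n / L := by
      rw [le_div_iff₀ (by linarith)]; nlinarith
    linarith
  have := uniformChoices_prob (n := n) hm
  set μ := uniformChoices n m
  set S : Set (Fin n → Fin m) := {X | ∀ b, 1 / 100 * L ≤ (load X b : ℝ) ∧ (load X b : ℝ) ≤ 5 * L}
  have hcompl : Sᶜ ⊆ ⋃ b : Fin m, ({X | (load X b : ℝ) < 1 / 100 * L} ∪
      {X | 5 * L < (load X b : ℝ)}) := by
    intro X hX
    simp only [S, Set.mem_compl_iff, Set.mem_ofPred_eq, not_forall, not_and_or, not_le] at hX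
    simpa using hX
  have hbound : μ.real Sᶜ ≤ 4 * (n : ℝ) ^ (-(1 / 5) : ℝ) := by
    calc μ.real Sᶜ ≤ μ.real (⋃ b : Fin m, ({X | (load X b : ℝ) < 1 / 100 * L} ∪
          {X | 5 * L < (load X b : ℝ)})) := measureReal_mono hcompl
      _ ≤ ∑ b : Fin m, μ.real ({X | (load X b : ℝ) < 1 / 100 * L} ∪
          {X | 5 * L < (load X b : ℝ)}) := measureReal_iUnion_fintype_le _
      _ ≤ ∑ b : Fin m, 4 * (n : ℝ) ^ (-(6 / 5) : ℝ) := by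
          apply Finset.sum_le_sum
          intro b _
          refine (measureReal_union_le _ _).trans ?_
          have h1 := lower hm (by omega) hlo b
          have h2 := upper hm (by omega) hup b
          have h3 : (n : ℝ) ^ (-3 : ℝ) ≤ (n : ℝ) ^ (-(6 / 5) : ℝ) :=
            Real.rpow_le_rpow_of_exponent_le (by linarith) (by norm_num)
          linarith
      _ = m * (4 * (n : ℝ) ^ (-(6 / 5) : ℝ)) := by simp
      _ ≤ n * (4 * (n : ℝ) ^ (-(6 / 5) : ℝ)) := by gcongr
      _ = 4 * ((n : ℝ) ^ (1 : ℝ) * (n : ℝ) ^ (-(6 / 5) : ℝ)) := by rw [Real.rpow_one]; ring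
      _ = _ := by rw [← Real.rpow_add hn0]; norm_num
  have hS : μ.real S = 1 - μ.real Sᶜ := by
    rw [probReal_compl_eq_one_sub (Set.toFinite S).measurableSet]; ring
  rw [← ofReal_measureReal (μ := μ) (s := S)]
  apply ENNReal.ofReal_le_ofReal
  linarith
end

section
/- There exists a natural number n₀ such that for every n ≥ n₀ the following holds. Let m = ⌈n / log₂ n⌉ and let n stations independently and uniformly at random each choose one of m groups. Then with probability at least 1 − 1/n, every group has load at most 4·log₂ n. -/
open MeasureTheory

theorem uniformFin_integral {m : ℕ} (hm : 0 < m) (b : Fin m) :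
    ∫ x, (if x = b then (2 : ℝ) else 1) ∂(uniformFin m) = 1 + 1 / (m : ℝ) := by
  have h0 : (m : ℝ) ≠ 0 := by exact_mod_cast hm.ne'
  have hf : ∀ x : Fin m, (if x = b then (2 : ℝ) else 1) = 1 + (if x = b then (1 : ℝ) else 0) := by
    intro x; split_ifs <;> norm_num
  simp_rw [hf]
  rw [uniformFin, integral_smul_measure, integral_count, Finset.sum_add_distrib]
  simp
  field_simp

theorem mgf_load {n m : ℕ} (hm : 0 < m) (b : Fin m) :
    ∫ X, (2 : ℝ) ^ (load X b) ∂(uniformChoices n m) = (1 + 1 / (m : ℝ)) ^ n := by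
  haveI := uniformFin_prob hm
  have h : ∀ X : Fin n → Fin m,
      (2 : ℝ) ^ (load X b) = ∏ i, (if X i = b then (2 : ℝ) else 1) := by
    intro X
    rw [load, Finset.prod_ite]
    simp
  simp_rw [h]
  rw [uniformChoices,
    integral_fintype_prod_eq_prod (𝕜 := ℝ) (fun (_ : Fin n) (x : Fin m) => if x = b then (2 : ℝ) else 1)]
  simp [uniformFin_integral hm b]

theorem tail_load {n m : ℕ} (hn : 2 ≤ n) (hm : 0 < m)
    (hml : (n : ℝ) / Real.logb 2 n ≤ m) (b : Fin m) :
    (uniformChoices n m).real {X | ¬ (load X b : ℝ) ≤ 4 * Real.logb 2 n} ≤ 1 / (n : ℝ) ^ 2 := by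
  haveI := uniformFin_prob hm
  haveI : IsProbabilityMeasure (uniformChoices n m) := by unfold uniformChoices; infer_instance
  have hn0 : (0 : ℝ) < n := by positivity
  have hm0 : (0 : ℝ) < m := by positivity
  set L := Real.logb 2 n with hL
  have hL0 : 0 < L := Real.logb_pos (by norm_num) (by exact_mod_cast hn)
  have h2L : (2 : ℝ) ^ L = n := Real.rpow_logb (by norm_num) (by norm_num) hn0
  have h4 : (2 : ℝ) ^ (4 * L) = (n : ℝ) ^ 4 := by
    rw [mul_comm, Real.rpow_mul (by norm_num), h2L]; norm_cast
  have hsub : (uniformChoices n m).real {X | ¬ (load X b : ℝ) ≤ 4 * L} ≤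
      (uniformChoices n m).real {X | (n : ℝ) ^ 4 ≤ (2 : ℝ) ^ (load X b)} := by
    apply measureReal_mono
    · intro X hX
      simp only [Set.mem_setOf_eq, not_le] at hX ⊢
      rw [← h4, ← Real.rpow_natCast]
      exact Real.rpow_le_rpow_of_exponent_le (by norm_num) hX.le
    · exact measure_ne_top _ _
  have hmk := mul_meas_ge_le_integral_of_nonneg (μ := uniformChoices n m)
    (f := fun X => (2 : ℝ) ^ (load X b)) (Filter.Eventually.of_forall fun X => by positivity)
    Integrable.of_finite ((n : ℝ) ^ 4)
  rw [mgf_load hm b] at hmk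
  have hexp : (1 + 1 / (m : ℝ)) ^ n ≤ (n : ℝ) ^ 2 := by
    calc (1 + 1 / (m : ℝ)) ^ n ≤ (Real.exp (1 / m)) ^ n := by
          gcongr; rw [add_comm]; exact Real.add_one_le_exp _
      _ = Real.exp (n / m) := by rw [← Real.exp_nat_mul]; congr 1; ring
      _ ≤ Real.exp L := by
          apply Real.exp_le_exp.2
          rw [div_le_iff₀ hm0]
          rw [div_le_iff₀ hL0] at hml
          linarith
      _ = (Real.exp 1) ^ L := by rw [← Real.exp_mul, one_mul]
      _ ≤ (2 ^ 2 : ℝ) ^ L := by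
          apply Real.rpow_le_rpow (Real.exp_pos _).le _ hL0.le
          have := Real.exp_one_lt_d9
          linarith
      _ = (n : ℝ) ^ 2 := by
          rw [← h2L, ← Real.rpow_natCast, ← Real.rpow_natCast, ← Real.rpow_mul (by norm_num),
            ← Real.rpow_mul (by norm_num), mul_comm]
  refine hsub.trans ?_
  rw [le_div_iff₀ (by positivity)]
  have hp : (0 : ℝ) < (n : ℝ) ^ 2 := by positivity
  have := hmk.trans hexp
  refine le_of_mul_le_mul_left ?_ hp
  calc _ = (n : ℝ) ^ 4 * (uniformChoices n m).real {X | (n : ℝ) ^ 4 ≤ (2 : ℝ) ^ (load X b)} := by ring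
    _ ≤ _ := by simpa using this

/-- When `n` stations independently and uniformly at random each choose one of
`m = ⌈n / log₂ n⌉` groups, with probability at least `1 - 1/n` every group has
load at most `4·log₂ n`. -/
theorem groups_load_upper_whp :
    ∃ n₀ : ℕ, ∀ n : ℕ, n₀ ≤ n →
      ENNReal.ofReal (1 - 1 / (n : ℝ)) ≤
        uniformChoices n ⌈(n : ℝ) / Real.logb 2 n⌉₊
          {X | ∀ b, (load X b : ℝ) ≤ 4 * Real.logb 2 n} := by
  refine ⟨2, fun n hn => ?_⟩
  have hn0 : (0 : ℝ) < n := by positivity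
  have hL1 : 1 ≤ Real.logb 2 n := by
    rw [Real.le_logb_iff_rpow_le (by norm_num) hn0]; simpa using (by exact_mod_cast hn : (2 : ℝ) ≤ n)
  have hml := Nat.le_ceil ((n : ℝ) / Real.logb 2 n)
  have hmn : ⌈(n : ℝ) / Real.logb 2 n⌉₊ ≤ n := Nat.ceil_le.2 (div_le_self hn0.le hL1)
  have hm : 0 < ⌈(n : ℝ) / Real.logb 2 n⌉₊ := Nat.ceil_pos.2 (by positivity)
  generalize ⌈(n : ℝ) / Real.logb 2 n⌉₊ = m at *
  haveI := uniformFin_prob hm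
  haveI : IsProbabilityMeasure (uniformChoices n m) := by unfold uniformChoices; infer_instance
  rw [ENNReal.ofReal_le_iff_le_toReal (measure_ne_top _ _)]
  change _ ≤ (uniformChoices n m).real _
  have hc := probReal_compl_eq_one_sub (μ := uniformChoices n m)
    (s := {X | ∀ b, (load X b : ℝ) ≤ 4 * Real.logb 2 n}) (Set.toFinite _).measurableSet
  have hu : {X : Fin n → Fin m | ∀ b, (load X b : ℝ) ≤ 4 * Real.logb 2 n}ᶜ
      = ⋃ b, {X | ¬ (load X b : ℝ) ≤ 4 * Real.logb 2 n} := by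
    ext X; simp
  have hb : (uniformChoices n m).real (⋃ b, {X | ¬ (load X b : ℝ) ≤ 4 * Real.logb 2 n})
      ≤ 1 / n := by
    calc _ ≤ ∑ b : Fin m, (uniformChoices n m).real {X | ¬ (load X b : ℝ) ≤ 4 * Real.logb 2 n} :=
          measureReal_iUnion_fintype_le _
      _ ≤ ∑ b : Fin m, 1 / (n : ℝ) ^ 2 := Finset.sum_le_sum fun b _ => tail_load hn hm hml b
      _ = m * (1 / (n : ℝ) ^ 2) := by simp
      _ ≤ n * (1 / (n : ℝ) ^ 2) := by gcongr
      _ = 1 / n := by field_simp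
  rw [← hu] at hb
  linarith
end

section
/- There exists a natural number n₀ such that for every n ≥ n₀ the following holds. Let m = ⌈n / log₂ n⌉ and let n stations independently and uniformly at random each choose one of m groups. Then for every fixed group b, the probability that the load of b is at most (1/4)·log₂ n is at most n^(−1/3). -/
open MeasureTheory

theorem uniformFin_isProb (m : ℕ) (hm : 0 < m) : IsProbabilityMeasure (uniformFin m) := by
  constructor
  simp only [uniformFin, Measure.smul_apply, smul_eq_mul, Measure.count_univ]
  simp
  exact ENNReal.inv_mul_cancel (by exact_mod_cast hm.ne') (by simp)

theorem integral_uniformFin (m : ℕ) (hm : 0 < m) (b : Fin m) :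
    ∫ x, (if x = b then (1 / 4 : ℝ) else 1) ∂(uniformFin m) = 1 - 3 / (4 * m) := by
  have hm' : (m : ℝ) ≠ 0 := by exact_mod_cast hm.ne'
  have h : ∀ x : Fin m, (if x = b then (1 / 4 : ℝ) else 1) = 1 - (if x = b then 3 / 4 else 0) := by
    intro x; split_ifs <;> norm_num
  rw [uniformFin, integral_smul_measure, integral_count]
  simp_rw [h]
  rw [Finset.sum_sub_distrib, Finset.sum_ite_eq']
  simp
  field_simp

theorem group_load_markov (n m : ℕ) (b : Fin m) (c : ℝ) :
    uniformChoices n m {X | (load X b : ℝ) ≤ c} ≤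
      ENNReal.ofReal ((1 - 3 / (4 * m)) ^ n * (4 : ℝ) ^ c) := by
  have hm : 0 < m := b.pos
  haveI := uniformFin_isProb m hm
  haveI : IsProbabilityMeasure (uniformChoices n m) := by
    unfold uniformChoices; infer_instance
  have hint : ∫ X, ∏ i, (if X i = b then (1 / 4 : ℝ) else 1) ∂(uniformChoices n m)
      = (1 - 3 / (4 * m)) ^ n := by
    unfold uniformChoices
    rw [integral_fintype_prod_eq_prod (fun _ x => if x = b then (1 / 4 : ℝ) else 1)]
    simp_rw [integral_uniformFin m hm b]
    simp
  have hprod : ∀ X : Fin n → Fin m,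
      ∏ i, (if X i = b then (1 / 4 : ℝ) else 1) = (4 : ℝ) ^ (-(load X b : ℝ)) := by
    intro X
    rw [Finset.prod_ite]
    simp [load, Real.rpow_neg]
  have hmk := mul_meas_ge_le_integral_of_nonneg (μ := uniformChoices n m)
    (f := fun X => ∏ i, (if X i = b then (1 / 4 : ℝ) else 1))
    (Filter.Eventually.of_forall fun X => by
      show 0 ≤ _
      exact Finset.prod_nonneg fun i _ => by split_ifs <;> norm_num)
    (Integrable.of_finite) ((4 : ℝ) ^ (-c))
  rw [hint] at hmk
  have hsub : {X : Fin n → Fin m | (load X b : ℝ) ≤ c} ⊆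
      {X | (4 : ℝ) ^ (-c) ≤ ∏ i, (if X i = b then (1 / 4 : ℝ) else 1)} := by
    intro X hX
    simp only [Set.mem_setOf_eq] at hX ⊢
    rw [hprod]
    exact Real.rpow_le_rpow_of_exponent_le (by norm_num) (by linarith)
  refine (measure_mono hsub).trans ?_
  rw [← ENNReal.ofReal_toReal (measure_ne_top (uniformChoices n m) _)]
  apply ENNReal.ofReal_le_ofReal
  rw [Real.rpow_neg (by norm_num)] at hmk ⊢
  rw [inv_mul_le_iff₀ (by positivity), mul_comm] at hmk
  exact hmk

/-- Lower-tail bound, per group: when `n` stations independently and uniformly at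
random each choose one of `m = ⌈n / log₂ n⌉` groups, for every fixed group `b` the
probability that the load of `b` is at most `(1/4)·log₂ n` is at most `n^(-1/3)`. -/
theorem group_load_lower_tail :
    ∃ n₀ : ℕ, ∀ n : ℕ, n₀ ≤ n →
      ∀ b : Fin ⌈(n : ℝ) / Real.logb 2 n⌉₊,
        uniformChoices n ⌈(n : ℝ) / Real.logb 2 n⌉₊
            {X | (load X b : ℝ) ≤ (1 / 4) * Real.logb 2 n} ≤
          ENNReal.ofReal ((n : ℝ) ^ (-(1 / 3) : ℝ)) := by
  refine ⟨32, fun n hn b => (group_load_markov n _ b _).trans (ENNReal.ofReal_le_ofReal ?_)⟩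
  have hm : 0 < ⌈(n : ℝ) / Real.logb 2 n⌉₊ := b.pos
  have hn' : (32 : ℝ) ≤ n := by exact_mod_cast hn
  have hn0 : (0 : ℝ) < n := by linarith
  have l1 := Real.log_two_lt_d9
  have l2 := Real.log_two_gt_d9
  have hlog : Real.log n ≤ n / 4 * Real.log 2 := by
    have h1 := Real.log_le_sub_one_of_pos (show (0 : ℝ) < n / 16 by positivity)
    rw [Real.log_div hn0.ne' (by norm_num), show (16 : ℝ) = 2 ^ 4 by norm_num, Real.log_pow] at h1
    push_cast at h1
    nlinarith
  have hlogpos : 0 < Real.log n := Real.log_pos (by linarith)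
  have hLdef : Real.logb 2 n * Real.log 2 = Real.log n := by
    rw [Real.logb]; field_simp
  set L := Real.logb 2 n with hL
  have hLpos : 0 < L := Real.logb_pos (by norm_num) (by linarith)
  have hL4 : L ≤ n / 4 := by
    rw [← hLdef] at hlog
    exact le_of_mul_le_mul_right hlog (by linarith)
  have hceil := Nat.ceil_lt_add_one (show 0 ≤ (n : ℝ) / L by positivity)
  set m := ⌈(n : ℝ) / L⌉₊ with hmdef
  have hm1 : (1 : ℝ) ≤ m := by exact_mod_cast hm
  have hmL : m * L ≤ 5 / 4 * n := by
    have : (m : ℝ) * L ≤ (n / L + 1) * L := by gcongr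
    have h2 : (n / L + 1) * L = n + L := by field_simp
    linarith
  have hbase : 0 ≤ 1 - 3 / (4 * (m : ℝ)) := by
    rw [sub_nonneg, div_le_one (by positivity)]; linarith
  have hpow : (1 - 3 / (4 * (m : ℝ))) ^ n ≤ Real.exp (-(3 / 5 * L)) := by
    calc _ ≤ (Real.exp (-(3 / (4 * (m : ℝ))))) ^ n := by
          gcongr
          exact Real.one_sub_le_exp_neg _
      _ = Real.exp (n * (-(3 / (4 * (m : ℝ))))) := by rw [← Real.exp_nat_mul]
      _ ≤ _ := by
          apply Real.exp_le_exp.mpr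
          rw [mul_neg, neg_le_neg_iff, mul_div_assoc', le_div_iff₀ (by positivity)]
          linarith
  have h4 : (4 : ℝ) ^ (1 / 4 * L) = Real.exp (Real.log n / 2) := by
    rw [Real.rpow_def_of_pos (by norm_num), show (4 : ℝ) = 2 ^ 2 by norm_num, Real.log_pow,
      ← hLdef]
    congr 1; push_cast; ring
  rw [h4, Real.rpow_def_of_pos hn0]
  calc _ ≤ Real.exp (-(3 / 5 * L)) * Real.exp (Real.log n / 2) := by gcongr
    _ = Real.exp (-(3 / 5 * L) + Real.log n / 2) := by rw [Real.exp_add]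
    _ ≤ _ := by
      apply Real.exp_le_exp.mpr
      rw [← hLdef]
      nlinarith
end

section
/- There exists a natural number n₀ such that for every n ≥ n₀ the following holds. Let m = ⌈n / log₂ n⌉ and let n stations independently and uniformly at random each choose one of m groups. Then for every fixed group b, the probability that the load of b is at least 4·log₂ n is at most n^(−2). -/
open MeasureTheory

theorem lintegral_uniform_aux (m : ℕ) (hm : 0 < m) (b : Fin m) :
    ∫⁻ x, (if x = b then (2:ENNReal) else 1) ∂(uniformFin m) = ENNReal.ofReal (1 + 1 / (m:ℝ)) := by
  have h0 : (m:ENNReal) ≠ 0 := by exact_mod_cast hm.ne'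
  have hs : ∑ x : Fin m, (if x = b then (2:ENNReal) else 1) = (m:ENNReal) + 1 := by
    have : ∀ x : Fin m, (if x = b then (2:ENNReal) else 1) = 1 + (if x = b then 1 else 0) := by
      intro x
      split_ifs
      · norm_num
      · simp
    simp only [this, Finset.sum_add_distrib]
    simp
  unfold uniformFin
  rw [lintegral_smul_measure, lintegral_count, tsum_fintype, hs, smul_eq_mul, mul_add,
    ENNReal.inv_mul_cancel h0 (ENNReal.natCast_ne_top m), mul_one,
    ENNReal.ofReal_add zero_le_one (by positivity), ENNReal.ofReal_one, one_div,
    ENNReal.ofReal_inv_of_pos (by exact_mod_cast hm), ENNReal.ofReal_natCast]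

instance uniformFin_finite_aux (m : ℕ) : SigmaFinite (uniformFin m) := by
  rcases Nat.eq_zero_or_pos m with rfl | hm
  · have : uniformFin 0 = 0 := Measure.eq_zero_of_isEmpty _
    rw [this]; infer_instance
  · have : IsFiniteMeasure (uniformFin m) := by
      refine ⟨?_⟩
      have h0 : (m:ENNReal) ≠ 0 := by exact_mod_cast hm.ne'
      simp [uniformFin, Measure.count_apply, ENNReal.inv_mul_cancel h0]
    infer_instance

theorem lintegral_load_aux (n m : ℕ) (hm : 0 < m) (b : Fin m) :
    ∫⁻ X, (2:ENNReal) ^ (load X b) ∂(uniformChoices n m)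
      = ENNReal.ofReal ((1 + 1 / (m:ℝ)) ^ n) := by
  have h : ∀ X : Fin n → Fin m, (2:ENNReal) ^ (load X b)
      = ∏ i, (if X i = b then (2:ENNReal) else 1) := by
    intro X
    simp [load, Finset.prod_ite]
  simp only [h]
  unfold uniformChoices
  rw [lintegral_fintype]
  simp only [Measure.pi_singleton, ← Finset.prod_mul_distrib]
  have hp := Finset.prod_univ_sum (fun _ : Fin n => (Finset.univ : Finset (Fin m)))
    (fun _ x => (if x = b then (2:ENNReal) else 1) * uniformFin m {x})
  rw [Fintype.piFinset_univ] at hp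
  rw [← hp, ← lintegral_fintype, lintegral_uniform_aux m hm b, Finset.prod_const,
    Finset.card_univ, Fintype.card_fin, ENNReal.ofReal_pow (by positivity)]

/-- Upper-tail (Chernoff-type) bound, per group: when `n` stations independently and
uniformly at random each choose one of `m = ⌈n / log₂ n⌉` groups, for every fixed group
`b` the probability that the load of `b` is at least `4·log₂ n` is at most `n^(-2)`. -/
theorem group_load_upper_tail :
    ∃ n₀ : ℕ, ∀ n : ℕ, n₀ ≤ n →
      ∀ b : Fin ⌈(n : ℝ) / Real.logb 2 n⌉₊,
        uniformChoices n ⌈(n : ℝ) / Real.logb 2 n⌉₊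
            {X | 4 * Real.logb 2 n ≤ (load X b : ℝ)} ≤
          ENNReal.ofReal ((n : ℝ) ^ (-2 : ℝ)) := by
  refine ⟨2, fun n hn => ?_⟩
  have hn2 : (2:ℝ) ≤ n := by exact_mod_cast hn
  have hn0 : (0:ℝ) < n := by linarith
  have hL : 0 < Real.logb 2 n := Real.logb_pos (by norm_num) (by linarith)
  have hmle : (n : ℝ) / Real.logb 2 n ≤ (⌈(n : ℝ) / Real.logb 2 n⌉₊ : ℝ) := Nat.le_ceil _
  generalize ⌈(n : ℝ) / Real.logb 2 n⌉₊ = m at hmle ⊢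
  intro b
  have hm : 0 < m := b.pos
  have hmR : (0:ℝ) < m := by exact_mod_cast hm
  have hE : (1 + 1 / (m:ℝ)) ^ n ≤ (n:ℝ) ^ 2 := by
    have h1 : (1 + 1 / (m:ℝ)) ≤ Real.exp (1 / m) := by
      have := Real.add_one_le_exp (1 / (m:ℝ)); linarith
    have h2 : (n:ℝ) * (1 / m) ≤ Real.logb 2 n := by
      rw [mul_one_div, div_le_iff₀ hmR]
      rw [div_le_iff₀ hL] at hmle
      linarith
    have h3 : Real.logb 2 n ≤ 2 * Real.log n := by
      have hl2 := Real.log_two_gt_d9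
      have hln : 0 < Real.log n := Real.log_pos (by linarith)
      rw [Real.logb, div_le_iff₀ (by linarith)]
      nlinarith
    calc (1 + 1 / (m:ℝ)) ^ n ≤ (Real.exp (1 / m)) ^ n := by gcongr
      _ = Real.exp (n * (1 / m)) := by rw [← Real.exp_nat_mul]
      _ ≤ Real.exp (2 * Real.log n) := Real.exp_le_exp.mpr (h2.trans h3)
      _ = (n:ℝ) ^ 2 := by
        rw [show (2:ℝ) = ((2:ℕ):ℝ) by norm_num, Real.exp_nat_mul, Real.exp_log hn0]
  have hsub : {X : Fin n → Fin m | 4 * Real.logb 2 n ≤ (load X b : ℝ)} ⊆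
      {X | ENNReal.ofReal ((n:ℝ) ^ 4) ≤ (2:ENNReal) ^ (load X b)} := by
    intro X hX
    simp only [Set.mem_ofPred_eq] at hX ⊢
    have h : (n:ℝ) ^ 4 ≤ 2 ^ (load X b) := by
      calc (n:ℝ) ^ 4 = (2:ℝ) ^ (4 * Real.logb 2 n) := by
            rw [mul_comm, Real.rpow_mul (by norm_num), Real.rpow_logb (by norm_num) (by norm_num) hn0]
            norm_cast
        _ ≤ (2:ℝ) ^ (load X b : ℝ) := Real.rpow_le_rpow_of_exponent_le (by norm_num) hX
        _ = 2 ^ (load X b) := Real.rpow_natCast _ _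
    calc ENNReal.ofReal ((n:ℝ) ^ 4) ≤ ENNReal.ofReal (2 ^ (load X b)) := ENNReal.ofReal_le_ofReal h
      _ = _ := by rw [ENNReal.ofReal_pow (by norm_num)]; norm_num
  refine (measure_mono hsub).trans ?_
  have hpos : (0:ℝ) < (n:ℝ) ^ 4 := by positivity
  refine (meas_ge_le_lintegral_div (Measurable.of_discrete).aemeasurable
    (ENNReal.ofReal_pos.mpr hpos).ne' ENNReal.ofReal_ne_top).trans ?_
  rw [lintegral_load_aux n m hm b, ← ENNReal.ofReal_div_of_pos hpos]
  apply ENNReal.ofReal_le_ofReal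
  rw [Real.rpow_neg hn0.le, div_le_iff₀ hpos]
  refine hE.trans (le_of_eq ?_)
  norm_cast
  push_cast
  field_simp
end
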